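/- The dual Koszul complex of global sections is a resolution concentrated in top degree: (i) for 0 ≤ q < n, every ω ∈ Ǩ^q with d_Ǩ ω = 0 satisfies ω = d_Ǩ(P̌ ω) (in particular ω = 0 when q = 0); (ii) an element f ě¹ ∧ … ∧ ěⁿ ∈ Ǩⁿ lies in the image of d_Ǩ : Ǩ^{n−1} → Ǩⁿ if and only if f(z, z) = 0 for all z ∈ U; hence the augmented complex 0 → Ǩ^0 → Ǩ^1 → … → Ǩⁿ → O(U) → 0, with augmentation f ě¹ ∧ … ∧ ěⁿ ↦ (z ↦ f(z, z)), is exact. -/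

import Mathlib

/-!
Setting: `n ≥ 1`, `U ⊆ ℂⁿ` a nonempty convex open set.  Points of `U × U` are
written `p = (z, ζ)` with `z = p.1`, `ζ = p.2`.  For `0 ≤ q ≤ n`,
`Ǩ^q = Λ^q((ℂⁿ)*) ⊗ O(U×U)` is encoded by the coefficients of its elements on
the basis `ě^I`, where the strictly increasing multi-indices
`I = (i₁ < … < i_q)` are encoded as finsets `I ⊆ Fin n` of cardinality `q`.
-/

open scoped BigOperators

namespace TwistedKoszulDual

variable (n : ℕ)

/-- Points of `ℂⁿ × ℂⁿ`. -/
abbrev Pt (n : ℕ) := (Fin n → ℂ) × (Fin n → ℂ)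

/-- A family of coefficients, indexed by the basis vectors `ě^I` of
`Λ^•((ℂⁿ)*)` (strictly increasing multi-indices `I`, encoded as finsets).
An element of `Ǩ^q` is such a family supported on finsets of cardinality `q`,
with holomorphic coefficients (see `MemK`). -/
abbrev Coeff (n : ℕ) := Finset (Fin n) → Pt n → ℂ

/-- The sign `(-1)^{#{i ∈ I | i < j}}`, so that `ě^j ∧ ě^I = sgn j I • ě^{I ∪ {j}}`
for `j ∉ I`, and `ι_{e_j} ě^I = sgn j (I \ {j}) • ě^{I \ {j}}` for `j ∈ I`. -/
noncomputable def sgn (j : Fin n) (I : Finset (Fin n)) : ℂ :=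
  (-1 : ℂ) ^ (I.filter (fun i => i < j)).card

/-- The holomorphic partial derivative `∂f/∂z^j` in the `j`-th coordinate of
the first factor. -/
noncomputable def pd (j : Fin n) (f : Pt n → ℂ) (p : Pt n) : ℂ :=
  fderiv ℂ f p (Pi.single j 1, 0)

/-- The dual Koszul differential `d_Ǩ : Ǩ^q → Ǩ^{q+1}`: exterior multiplication
by `Σ_i (z^i - ζ^i) ě^i`. -/
noncomputable def dKd (ω : Coeff n) : Coeff n := fun J p =>
  ∑ j ∈ J, sgn n j (J.erase j) * ((p.1 j - p.2 j) * ω (J.erase j) p)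

/-- The homotopy operator `P̌ : Ǩ^q → Ǩ^{q-1}`:
`P̌(f ě^I) = Σ_j (∫₀¹ t^{n-|I|} (∂f/∂z^j)(ζ + t(z - ζ), ζ) dt) ι_{e_j} ě^I`. -/
noncomputable def Pd (ω : Coeff n) : Coeff n := fun J p =>
  ∑ j ∈ Jᶜ, sgn n j J *
    ∫ t in (0:ℝ)..1, (t : ℂ) ^ (n - (J.card + 1)) *
      pd n j (ω (insert j J)) (p.2 + t • (p.1 - p.2), p.2)

/-- The operator `reš`: zero on `Ǩ^q` for `q ≠ n`, and
`reš(f ě^1 ∧ … ∧ ě^n)(z, ζ) = f(ζ, ζ) ě^1 ∧ … ∧ ě^n` on `Ǩ^n`. -/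
noncomputable def resd (ω : Coeff n) : Coeff n := fun J p =>
  if J = Finset.univ then ω Finset.univ (p.2, p.2) else 0

/-- `ω` is an element of `Ǩ^q` over `U × U`: it is supported on multi-indices
of length `q` and its coefficients are holomorphic on `U × U`. -/
def MemK (U : Set (Fin n → ℂ)) (q : ℕ) (ω : Coeff n) : Prop :=
  (∀ I : Finset (Fin n), I.card ≠ q → ω I = 0) ∧
  ∀ I : Finset (Fin n), DifferentiableOn ℂ (ω I) (U ×ˢ U)

end TwistedKoszulDual

/-!
Let `D = Σ_k ι_{e_k} ∂/∂z^k`. Since `ι_{e_k}` and exterior multiplication by a covector `x`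
anticommute up to the scalar `x_k`, the product rule gives a Cartan-type identity: on the
`ě^J`-coefficient, `D d_Ǩ + d_Ǩ D` is `(n - |J|) + Σ_k (z^k - ζ^k) ∂/∂z^k`. Evaluated at
`(ζ + t (z - ζ), ζ)` and multiplied by `t^(n - |J| - 1)`, the right-hand side applied to `ω` is the
`t`-derivative of `t^(n - |J|) ω_J(ζ + t (z - ζ), ζ)`. Integrating over `[0, 1]` yields
`d_Ǩ P̌ + P̌ d_Ǩ = 1 - reš`, where `reš` is the boundary term at `t = 0`, zero unless
`|J| = n`. The holomorphy of `P̌ ω` comes from Cauchy's estimate, which bounds the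
derivatives of the integrand so that one may differentiate under the integral sign.
-/

namespace TwistedKoszulDual

section HolomorphicDependence

open Set Metric MeasureTheory

variable {E G X : Type*} [NormedAddCommGroup E] [NormedSpace ℂ E]
  [NormedAddCommGroup G] [NormedSpace ℂ G] {W : Set E}

theorem norm_fderiv_le_of_norm_le {f : E → G} {c : E} {r M : ℝ} (hr : 0 < r)
    (hf : DifferentiableOn ℂ f (ball c r)) (hM : ∀ p ∈ ball c r, ‖f p‖ ≤ M) :
    ‖fderiv ℂ f c‖ ≤ 2 * M / r := by
  refine Complex.norm_fderiv_le_div_of_mapsTo_ball hf (fun p hp => ?_) hr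
  rw [mem_closedBall, dist_eq_norm]
  linarith [norm_sub_le (f p) (f c), hM p hp, hM c (mem_ball_self hr)]

theorem continuousOn_fderiv_of_continuousOn_uncurry [ProperSpace E] [TopologicalSpace X]
    {K : Set X} (hW : IsOpen W) {F : X → E → G} (hF : ∀ t ∈ K, DifferentiableOn ℂ (F t) W)
    (hcont : ContinuousOn (Function.uncurry F) (K ×ˢ W)) {p : E} (hp : p ∈ W) :
    ContinuousOn (fun t => fderiv ℂ (F t) p) K := by
  obtain ⟨r, hr, hrW⟩ := nhds_basis_closedBall.mem_iff.1 (hW.mem_nhds hp)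
  have hball : ball p r ⊆ W := ball_subset_closedBall.trans hrW
  intro t₀ ht₀
  refine Metric.tendsto_nhds.2 fun ε hε => ?_
  obtain ⟨V, hV, hFV⟩ := (isCompact_closedBall p r).mem_uniformity_of_prod
    (hcont.mono (prod_mono_right hrW)) ht₀ (dist_mem_uniformity (show 0 < ε * r / 4 by positivity))
  filter_upwards [hV, self_mem_nhdsWithin] with t htV htK
  have hdiff : DifferentiableOn ℂ (F t - F t₀) (ball p r) :=
    ((hF t htK).sub (hF t₀ ht₀)).mono hball
  have hclose : ∀ x ∈ ball p r, ‖(F t - F t₀) x‖ ≤ ε * r / 4 := fun x hx => by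
    have hdist : dist (F t x) (F t₀ x) < ε * r / 4 := hFV t htV x (ball_subset_closedBall hx)
    exact (dist_eq_norm (F t x) (F t₀ x) ▸ hdist).le
  have hdiffAt : ∀ s ∈ K, DifferentiableAt ℂ (F s) p := fun s hs =>
    (hF s hs).differentiableAt (hW.mem_nhds hp)
  calc dist (fderiv ℂ (F t) p) (fderiv ℂ (F t₀) p)
      = ‖fderiv ℂ (F t - F t₀) p‖ := by
        rw [dist_eq_norm, fderiv_sub (hdiffAt t htK) (hdiffAt t₀ ht₀)]
    _ ≤ 2 * (ε * r / 4) / r := norm_fderiv_le_of_norm_le hr hdiff hclose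
    _ = ε / 2 := by field
    _ < ε := half_lt_self hε

theorem differentiableOn_setIntegral_of_isCompact [ProperSpace E] [TopologicalSpace X]
    [T2Space X] [MeasurableSpace X] [OpensMeasurableSpace X] {μ : Measure X}
    [IsFiniteMeasureOnCompacts μ] {K : Set X} (hK : IsCompact K) (hW : IsOpen W) {F : X → E → G}
    (hF : ∀ t ∈ K, DifferentiableOn ℂ (F t) W)
    (hcont : ContinuousOn (Function.uncurry F) (K ×ˢ W)) :
    DifferentiableOn ℂ (fun p => ∫ t in K, F t p ∂μ) W := by
  intro p₀ hp₀
  obtain ⟨r, hr, hrW⟩ := nhds_basis_closedBall.mem_iff.1 (hW.mem_nhds hp₀)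
  obtain ⟨M, hM⟩ := (hK.prod (isCompact_closedBall p₀ r)).exists_bound_of_continuousOn
    (hcont.mono (prod_mono_right hrW))
  have hslice : ∀ p ∈ W, ContinuousOn (fun t => F t p) K := fun p hp =>
    hcont.comp (f := fun t => (t, p)) (by fun_prop) fun t ht => ⟨ht, hp⟩
  have hball : ∀ p ∈ ball p₀ (r / 2), ball p (r / 2) ⊆ closedBall p₀ r := fun p hp x hx => by
    rw [mem_ball] at hp hx
    rw [mem_closedBall]
    linarith [dist_triangle x p p₀]
  have hbound : ∀ t ∈ K, ∀ p ∈ ball p₀ (r / 2), ‖fderiv ℂ (F t) p‖ ≤ 2 * M / (r / 2) :=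
    fun t ht p hp => norm_fderiv_le_of_norm_le (half_pos hr)
      ((hF t ht).mono ((hball p hp).trans hrW)) fun x hx => hM (t, x) ⟨ht, hball p hp hx⟩
  have hderiv : ∀ t ∈ K, ∀ p ∈ ball p₀ (r / 2), HasFDerivAt (F t) (fderiv ℂ (F t) p) p :=
    fun t ht p hp => ((hF t ht).differentiableAt (hW.mem_nhds
      (hrW (hball p hp (mem_ball_self (half_pos hr)))))).hasFDerivAt
  have hmain := hasFDerivAt_integral_of_dominated_of_fderiv_le (μ := μ.restrict K)
    (F := fun p t => F t p) (F' := fun p t => fderiv ℂ (F t) p) (bound := fun _ => 2 * M / (r / 2))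
    (ball_mem_nhds p₀ (half_pos hr))
    (by filter_upwards [hW.mem_nhds hp₀] with p hp using
      (hslice p hp).aestronglyMeasurable_of_isCompact hK hK.measurableSet)
    ((hslice p₀ hp₀).integrableOn_compact hK)
    ((continuousOn_fderiv_of_continuousOn_uncurry hW hF hcont hp₀).aestronglyMeasurable_of_isCompact
      hK hK.measurableSet)
    (ae_restrict_of_forall_mem hK.measurableSet hbound)
    (integrableOn_const hK.measure_ne_top)
    (ae_restrict_of_forall_mem hK.measurableSet hderiv)
  exact hmain.differentiableAt.differentiableWithinAt

theorem differentiableOn_intervalIntegral [ProperSpace E] {a b : ℝ} (hab : a ≤ b) (hW : IsOpen W)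
    {F : ℝ → E → G} (hF : ∀ t ∈ Icc a b, DifferentiableOn ℂ (F t) W)
    (hcont : ContinuousOn (Function.uncurry F) (Icc a b ×ˢ W)) :
    DifferentiableOn ℂ (fun p => ∫ t in a..b, F t p) W := by
  simp only [intervalIntegral.integral_of_le hab, ← integral_Icc_eq_integral_Ioc]
  exact differentiableOn_setIntegral_of_isCompact isCompact_Icc hW hF hcont

theorem differentiableOn_circleIntegral [ProperSpace E] {c : ℂ} {R : ℝ} (hR : 0 ≤ R)
    (hW : IsOpen W) {F : ℂ → E → G} (hF : ∀ w ∈ sphere c R, DifferentiableOn ℂ (F w) W)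
    (hcont : ContinuousOn (Function.uncurry F) (sphere c R ×ˢ W)) :
    DifferentiableOn ℂ (fun p => ∮ w in C(c, R), F w p) W := by
  refine differentiableOn_intervalIntegral Real.two_pi_pos.le hW
    (fun θ _ => (hF _ (circleMap_mem_sphere c hR θ)).const_smul (deriv (circleMap c R) θ)) ?_
  have hderiv : Continuous fun x : ℝ × E => deriv (circleMap c R) x.1 := by
    simp only [deriv_circleMap]
    exact ((continuous_circleMap 0 R).comp continuous_fst).mul continuous_const
  exact hderiv.continuousOn.smul <| hcont.comp (f := fun x : ℝ × E => (circleMap c R x.1, x.2))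
    (((continuous_circleMap c R).comp continuous_fst).prodMk continuous_snd).continuousOn
    fun x hx => ⟨circleMap_mem_sphere c hR x.1, hx.2⟩

theorem fderiv_apply_eq_cderiv [CompleteSpace G] (hW : IsOpen W) {f : E → G}
    (hf : DifferentiableOn ℂ f W) {p v : E} {ρ : ℝ} (hρ : 0 < ρ)
    (hline : ∀ w ∈ closedBall (0 : ℂ) ρ, p + w • v ∈ W) :
    fderiv ℂ f p v = Complex.cderiv ρ (fun w => f (p + w • v)) 0 := by
  have hp : p ∈ W := by simpa using hline 0 (mem_closedBall_self hρ.le)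
  have hopen : IsOpen ((fun w : ℂ => p + w • v) ⁻¹' W) := hW.preimage (by fun_prop)
  have hslice : DifferentiableOn ℂ (fun w : ℂ => f (p + w • v))
      ((fun w : ℂ => p + w • v) ⁻¹' W) :=
    hf.comp (by fun_prop) fun _ hw => hw
  rw [Complex.cderiv_eq_deriv hopen hslice hρ hline]
  exact (hf.differentiableAt (hW.mem_nhds hp)).lineDeriv_eq_fderiv.symm

theorem differentiableOn_fderiv_apply [ProperSpace E] [CompleteSpace G] (hW : IsOpen W)
    {f : E → G} (hf : DifferentiableOn ℂ f W) (v : E) :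
    DifferentiableOn ℂ (fun p => fderiv ℂ f p v) W := by
  intro p₀ hp₀
  have hnhds : (fun x : E × ℂ => x.1 + x.2 • v) ⁻¹' W ∈ nhds (p₀, 0) :=
    (hW.preimage (by fun_prop)).mem_nhds (by simpa using hp₀)
  obtain ⟨ρ, hρ, hρW⟩ := nhds_basis_closedBall.mem_iff.1 hnhds
  rw [← closedBall_prod_same] at hρW
  have hline : ∀ p ∈ ball p₀ ρ, ∀ w ∈ closedBall (0 : ℂ) ρ, p + w • v ∈ W := fun p hp w hw =>
    @hρW (p, w) ⟨ball_subset_closedBall hp, hw⟩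
  have hcircle : DifferentiableOn ℂ
      (fun p => ∮ w in C(0, ρ), ((w - 0) ^ 2)⁻¹ • f (p + w • v)) (ball p₀ ρ) := by
    refine differentiableOn_circleIntegral hρ.le isOpen_ball (fun w hw => ?_) ?_
    · exact (hf.comp (by fun_prop) fun p hp =>
        hline p hp w (sphere_subset_closedBall hw)).const_smul (((w - 0) ^ 2)⁻¹)
    · refine ContinuousOn.smul (f := fun x : ℂ × E => ((x.1 - 0) ^ 2)⁻¹) ?_ ?_
      · exact ContinuousOn.inv₀ (by fun_prop) fun x hx =>
          pow_ne_zero 2 (by simpa using ne_of_mem_sphere hx.1 hρ.ne')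
      · exact hf.continuousOn.comp (f := fun x : ℂ × E => x.2 + x.1 • v) (by fun_prop)
          fun x hx => hline x.2 hx.2 x.1 (sphere_subset_closedBall hx.1)
  have hformula : DifferentiableOn ℂ (fun p => fderiv ℂ f p v) (ball p₀ ρ) :=
    (hcircle.const_smul (2 * Real.pi * Complex.I : ℂ)⁻¹).congr fun p hp =>
      fderiv_apply_eq_cderiv hW hf hρ (hline p hp)
  exact (hformula.differentiableAt (ball_mem_nhds p₀ hρ)).differentiableWithinAt

end HolomorphicDependence

section ExteriorAlgebra

variable {n : ℕ}

/-- Exterior multiplication by `Σ_j x_j ě^j` on coefficient families in the basis `ě^I`. -/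
noncomputable def wedge (x : Fin n → ℂ) (c : Finset (Fin n) → ℂ) : Finset (Fin n) → ℂ := fun J =>
  ∑ j ∈ J, sgn n j (J.erase j) * (x j * c (J.erase j))

/-- The contraction `ι_{e_k}` on coefficient families in the basis `ě^I`. -/
noncomputable def contract (k : Fin n) (c : Finset (Fin n) → ℂ) : Finset (Fin n) → ℂ := fun J =>
  if k ∈ J then 0 else sgn n k J * c (insert k J)

theorem contract_add (k : Fin n) (c c' : Finset (Fin n) → ℂ) (J : Finset (Fin n)) :
    contract k (fun I => c I + c' I) J = contract k c J + contract k c' J := by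
  unfold contract
  split_ifs
  · rw [add_zero]
  · rw [mul_add]

theorem sgn_mul_self (j : Fin n) (I : Finset (Fin n)) : sgn n j I * sgn n j I = 1 := by
  rw [sgn, ← mul_pow]
  simp

theorem sgn_insert {i : Fin n} {I : Finset (Fin n)} (hi : i ∉ I) (j : Fin n) :
    sgn n j (insert i I) = (if i < j then -1 else 1) * sgn n j I := by
  unfold sgn
  rw [Finset.filter_insert]
  split_ifs
  · rw [Finset.card_insert_of_notMem (by simp [hi]), pow_succ']
  · rw [one_mul]

theorem sgn_mul_sgn_insert {j k : Fin n} {I : Finset (Fin n)} (hjk : j ≠ k) (hj : j ∉ I)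
    (hk : k ∉ I) :
    sgn n k (insert j I) * sgn n j (insert k I) = -(sgn n j I * sgn n k I) := by
  rw [sgn_insert hj, sgn_insert hk]
  rcases lt_or_gt_of_ne hjk with h | h <;> simp [h, h.not_gt, mul_comm]

theorem wedge_finsetSum {ι : Type*} (s : Finset ι) (x : Fin n → ℂ)
    (c : ι → Finset (Fin n) → ℂ) (J : Finset (Fin n)) :
    wedge x (fun I => ∑ i ∈ s, c i I) J = ∑ i ∈ s, wedge x (c i) J := by
  simp only [wedge, Finset.mul_sum]
  exact Finset.sum_comm

theorem wedge_single_one (k : Fin n) (c : Finset (Fin n) → ℂ) (J : Finset (Fin n)) :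
    wedge (Pi.single k 1) c J = if k ∈ J then sgn n k (J.erase k) * c (J.erase k) else 0 := by
  simp [wedge, Pi.single_apply]

theorem contract_wedge_single_one (k : Fin n) (c : Finset (Fin n) → ℂ) (J : Finset (Fin n)) :
    contract k (wedge (Pi.single k 1) c) J = if k ∈ J then 0 else c J := by
  unfold contract
  split_ifs with hk
  · rfl
  · rw [wedge_single_one, if_pos (Finset.mem_insert_self k J), Finset.erase_insert hk, ← mul_assoc,
      sgn_mul_self, one_mul]

theorem sum_contract_wedge_single_one (c : Finset (Fin n) → ℂ) (J : Finset (Fin n)) :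
    ∑ k, contract k (wedge (Pi.single k 1) c) J = (n - J.card : ℕ) * c J := by
  simp [contract_wedge_single_one, Finset.sum_ite, Finset.filter_notMem_eq_sdiff,
    ← Finset.compl_eq_univ_sdiff, Finset.card_compl]

theorem contract_wedge_add_wedge_contract (k : Fin n) (x : Fin n → ℂ)
    (c : Finset (Fin n) → ℂ) (J : Finset (Fin n)) :
    contract k (wedge x c) J + wedge x (contract k c) J = x k * c J := by
  by_cases hk : k ∈ J
  · have hother : ∀ j ∈ J, j ≠ k →
        sgn n j (J.erase j) * (x j * contract k c (J.erase j)) = 0 := fun j _ hjk => by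
      simp [contract, hk, hjk.symm]
    rw [contract, if_pos hk, zero_add, wedge, Finset.sum_eq_single_of_mem k hk hother, contract,
      if_neg (Finset.notMem_erase k J), Finset.insert_erase hk]
    linear_combination (x k * c J) * sgn_mul_self k (J.erase k)
  · have hcancel : ∀ j ∈ J, sgn n k J * (sgn n j ((insert k J).erase j) *
        (x j * c ((insert k J).erase j))) +
          sgn n j (J.erase j) * (x j * contract k c (J.erase j)) = 0 := fun j hj => by
      have hjk : j ≠ k := fun h => hk (h ▸ hj)
      have hkJ : k ∉ J.erase j := fun h => hk (Finset.mem_of_mem_erase h)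
      have hsgn := sgn_mul_sgn_insert hjk (Finset.notMem_erase j J) hkJ
      rw [Finset.insert_erase hj] at hsgn
      rw [contract, if_neg hkJ, Finset.erase_insert_of_ne hjk.symm]
      linear_combination (x j * c (insert k (J.erase j))) * hsgn
    rw [contract, if_neg hk, wedge, wedge, Finset.sum_insert hk, Finset.erase_insert hk, mul_add,
      add_assoc, Finset.mul_sum, ← Finset.sum_add_distrib, Finset.sum_eq_zero hcancel]
    linear_combination (x k * c J) * sgn_mul_self k J

end ExteriorAlgebra

section KoszulHomotopy

open Set MeasureTheory

variable {n : ℕ} {U : Set (Fin n → ℂ)} {ω : Coeff n}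

/-- The divergence-type operator `Σ_k ι_{e_k} ∂/∂z^k` on `Ǩ^•`, of which `P̌` is a weighted average
along the segments from `(ζ, ζ)` to `(z, ζ)`. -/
noncomputable def divergence (ω : Coeff n) : Coeff n := fun J p =>
  ∑ k, contract k (fun I => pd n k (ω I) p) J

/-- The homothety `(z, ζ) ↦ (ζ + t (z - ζ), ζ)` of ratio `t` towards the diagonal. -/
noncomputable def shrink (t : ℝ) (p : Pt n) : Pt n := (p.2 + t • (p.1 - p.2), p.2)

theorem continuous_shrink : Continuous fun x : ℝ × Pt n => shrink x.1 x.2 := by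
  unfold shrink
  fun_prop

theorem differentiable_shrink (t : ℝ) : Differentiable ℂ (shrink t : Pt n → Pt n) :=
  (differentiable_snd.add ((differentiable_fst.sub differentiable_snd).const_smul t)).prodMk
    differentiable_snd

theorem hasDerivAt_shrink (p : Pt n) (t : ℝ) :
    HasDerivAt (fun s => shrink s p) (p.1 - p.2, 0) t := by
  have hfst : HasDerivAt (fun s : ℝ => p.2 + s • (p.1 - p.2)) (p.1 - p.2) t := by
    simpa using ((hasDerivAt_id t).smul_const (p.1 - p.2)).const_add p.2
  exact hfst.prodMk (hasDerivAt_const t p.2)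

theorem shrink_mem (hU : Convex ℝ U) {p : Pt n} (hp : p ∈ U ×ˢ U) {t : ℝ}
    (ht : t ∈ Icc (0 : ℝ) 1) : shrink t p ∈ U ×ˢ U :=
  ⟨hU.add_smul_sub_mem hp.2 hp.1 ht, hp.2⟩

theorem dKd_shrink (ω : Coeff n) (J : Finset (Fin n)) (t : ℝ) (p : Pt n) :
    dKd n ω J (shrink t p) = t * wedge (p.1 - p.2) (fun I => ω I (shrink t p)) J := by
  simp only [dKd, wedge, shrink, Finset.mul_sum, Pi.add_apply, Pi.smul_apply, Pi.sub_apply,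
    Complex.real_smul]
  exact Finset.sum_congr rfl fun j _ => by ring

theorem differentiableOn_dKd (hω : ∀ I, DifferentiableOn ℂ (ω I) (U ×ˢ U))
    (J : Finset (Fin n)) : DifferentiableOn ℂ (dKd n ω J) (U ×ˢ U) := by
  unfold dKd
  exact DifferentiableOn.fun_sum fun j _ => ((by fun_prop : DifferentiableOn ℂ
    (fun p : Pt n => p.1 j - p.2 j) (U ×ˢ U)).mul (hω (J.erase j))).const_mul _

theorem fderiv_apply_fst_eq_sum_pd (f : Pt n → ℂ) (p : Pt n) (x : Fin n → ℂ) :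
    fderiv ℂ f p (x, 0) = ∑ k, x k * pd n k f p := by
  have hx : (x, 0) = ∑ k, x k • ((Pi.single k 1, 0) : Pt n) := by
    ext i
    · simp [Prod.fst_sum, Finset.sum_apply, Pi.single_apply]
    · simp [Prod.snd_sum, Finset.sum_apply]
  rw [hx, map_sum]
  exact Finset.sum_congr rfl fun k _ => map_smul _ _ _

theorem pd_dKd {p : Pt n} (hω : ∀ I, DifferentiableAt ℂ (ω I) p) (k : Fin n)
    (J : Finset (Fin n)) :
    pd n k (dKd n ω J) p = wedge (Pi.single k 1) (fun I => ω I p) J +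
      wedge (p.1 - p.2) (fun I => pd n k (ω I) p) J := by
  let coord (j : Fin n) : Pt n →L[ℂ] ℂ := ContinuousLinearMap.proj j ∘L
    (ContinuousLinearMap.fst ℂ (Fin n → ℂ) (Fin n → ℂ) - ContinuousLinearMap.snd ℂ _ _)
  have hderiv : HasFDerivAt (dKd n ω J) (∑ j ∈ J, sgn n j (J.erase j) •
      (coord j p • fderiv ℂ (ω (J.erase j)) p + ω (J.erase j) p • coord j)) p :=
    HasFDerivAt.fun_sum fun j _ =>
      ((coord j).hasFDerivAt.mul (hω (J.erase j)).hasFDerivAt).const_mul (sgn n j (J.erase j))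
  rw [pd, hderiv.fderiv, wedge, wedge, ← Finset.sum_add_distrib]
  have hcoord : ∀ j (q : Pt n), coord j q = q.1 j - q.2 j := fun _ _ => rfl
  simp only [sum_apply, smul_apply, add_apply, smul_eq_mul, hcoord, pd, Pi.zero_apply, sub_zero,
    Pi.sub_apply]
  exact Finset.sum_congr rfl fun j _ => by ring

theorem divergence_dKd_add_dKd_divergence {p : Pt n} (hω : ∀ I, DifferentiableAt ℂ (ω I) p)
    (J : Finset (Fin n)) :
    divergence (dKd n ω) J p + dKd n (divergence ω) J p =
      (n - J.card : ℕ) * ω J p + fderiv ℂ (ω J) p (p.1 - p.2, 0) := by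
  have hdivergence_dKd : divergence (dKd n ω) J p = (n - J.card : ℕ) * ω J p +
      ∑ k, contract k (wedge (p.1 - p.2) fun I => pd n k (ω I) p) J := by
    simp only [divergence, pd_dKd hω, contract_add, Finset.sum_add_distrib]
    rw [sum_contract_wedge_single_one]
  have hdKd_divergence : dKd n (divergence ω) J p =
      ∑ k, wedge (p.1 - p.2) (contract k fun I => pd n k (ω I) p) J :=
    wedge_finsetSum _ _ _ _
  rw [hdivergence_dKd, hdKd_divergence, fderiv_apply_fst_eq_sum_pd, add_assoc,
    ← Finset.sum_add_distrib]
  simp only [contract_wedge_add_wedge_contract]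

theorem divergence_eq_sum_compl (ω : Coeff n) (J : Finset (Fin n)) (p : Pt n) :
    divergence ω J p = ∑ k ∈ Jᶜ, sgn n k J * pd n k (ω (insert k J)) p := by
  simp [divergence, contract, Finset.sum_ite, Finset.filter_notMem_eq_sdiff,
    ← Finset.compl_eq_univ_sdiff]

theorem differentiableOn_divergence (hU : IsOpen U)
    (hω : ∀ I, DifferentiableOn ℂ (ω I) (U ×ˢ U)) (J : Finset (Fin n)) :
    DifferentiableOn ℂ (divergence ω J) (U ×ˢ U) := by
  simp only [funext (divergence_eq_sum_compl ω J)]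
  exact DifferentiableOn.fun_sum fun k _ =>
    (differentiableOn_fderiv_apply (hU.prod hU) (hω (insert k J)) _).const_mul _

theorem continuousOn_pow_mul_comp_shrink (hU : Convex ℝ U) {f : Pt n → ℂ}
    (hf : ContinuousOn f (U ×ˢ U)) {p : Pt n} (hp : p ∈ U ×ˢ U) (m : ℕ) :
    ContinuousOn (fun t : ℝ => (t : ℂ) ^ m * f (shrink t p)) (Icc 0 1) :=
  ContinuousOn.mul (by fun_prop) <| hf.comp
    (continuous_shrink.comp (by fun_prop : Continuous fun t : ℝ => (t, p))).continuousOn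
    fun _ ht => shrink_mem hU hp ht

theorem Pd_eq_integral_divergence (hUo : IsOpen U) (hUc : Convex ℝ U)
    (hω : ∀ I, DifferentiableOn ℂ (ω I) (U ×ˢ U)) (J : Finset (Fin n)) {p : Pt n}
    (hp : p ∈ U ×ˢ U) :
    Pd n ω J p =
      ∫ t in (0 : ℝ)..1, (t : ℂ) ^ (n - (J.card + 1)) * divergence ω J (shrink t p) := by
  have hintegrable : ∀ k, IntervalIntegrable (fun t : ℝ => (t : ℂ) ^ (n - (J.card + 1)) *
      pd n k (ω (insert k J)) (shrink t p)) volume 0 1 := fun k =>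
    (continuousOn_pow_mul_comp_shrink hUc (differentiableOn_fderiv_apply (hUo.prod hUo)
      (hω (insert k J)) _).continuousOn hp _).intervalIntegrable_of_Icc zero_le_one
  simp_rw [divergence_eq_sum_compl, Finset.mul_sum, mul_left_comm _ (sgn n _ J)]
  rw [intervalIntegral.integral_finsetSum fun k _ => (hintegrable k).const_mul _]
  simp only [intervalIntegral.integral_const_mul]
  rfl

theorem differentiableOn_Pd (hUo : IsOpen U) (hUc : Convex ℝ U)
    (hω : ∀ I, DifferentiableOn ℂ (ω I) (U ×ˢ U)) (J : Finset (Fin n)) :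
    DifferentiableOn ℂ (Pd n ω J) (U ×ˢ U) := by
  have hdiv := differentiableOn_divergence hUo hω J
  refine (differentiableOn_intervalIntegral zero_le_one (hUo.prod hUo) (fun t ht => ?_) ?_).congr
    fun p hp => Pd_eq_integral_divergence hUo hUc hω J hp
  · exact (hdiv.comp (differentiable_shrink t).differentiableOn
      fun p hp => shrink_mem hUc hp ht).const_mul _
  · exact ContinuousOn.mul (by fun_prop) (hdiv.continuousOn.comp continuous_shrink.continuousOn
      fun x hx => shrink_mem hUc hx.2 hx.1)

theorem dKd_Pd_eq_integral_wedge (hUo : IsOpen U) (hUc : Convex ℝ U)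
    (hω : ∀ I, DifferentiableOn ℂ (ω I) (U ×ˢ U)) (J : Finset (Fin n)) {p : Pt n}
    (hp : p ∈ U ×ˢ U) :
    dKd n (Pd n ω) J p = ∫ t in (0 : ℝ)..1, (t : ℂ) ^ (n - J.card) *
      wedge (p.1 - p.2) (fun I => divergence ω I (shrink t p)) J := by
  have hintegrable : ∀ j, IntervalIntegrable (fun t : ℝ => (t : ℂ) ^ (n - J.card) *
      divergence ω (J.erase j) (shrink t p)) volume 0 1 := fun j =>
    (continuousOn_pow_mul_comp_shrink hUc (differentiableOn_divergence hUo hω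
      (J.erase j)).continuousOn hp _).intervalIntegrable_of_Icc zero_le_one
  simp_rw [wedge, Finset.mul_sum, mul_left_comm ((_ : ℂ) ^ (n - J.card))]
  rw [intervalIntegral.integral_finsetSum fun j _ => ((hintegrable j).const_mul _).const_mul _]
  refine Finset.sum_congr rfl fun j hj => ?_
  rw [Pd_eq_integral_divergence hUo hUc hω _ hp, Finset.card_erase_add_one hj,
    intervalIntegral.integral_const_mul, intervalIntegral.integral_const_mul]
  rfl

theorem continuousOn_wedge (x : Fin n → ℂ) {S : Set (Pt n)} (hω : ∀ I, ContinuousOn (ω I) S)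
    (J : Finset (Fin n)) : ContinuousOn (fun p => wedge x (fun I => ω I p) J) S := by
  unfold wedge
  fun_prop

theorem pow_mul_divergence_eq (ω : Coeff n) (J : Finset (Fin n)) (t : ℂ) (p : Pt n) :
    t ^ (n - J.card) * divergence ω J p =
      t * (t ^ (n - (J.card + 1)) * divergence ω J p) := by
  rcases eq_or_ne J Finset.univ with rfl | hJ
  -- Here the exponent on the right is a truncated `-1`, but the divergence has no top-degree part.
  · simp [divergence_eq_sum_compl]
  · have hcard : J.card < n := by simpa using (Finset.card_lt_iff_ne_univ J).2 hJ
    rw [show n - J.card = n - (J.card + 1) + 1 by omega]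
    ring

theorem hasDerivAt_pow_mul_comp_shrink {t : ℝ} (ht : t ≠ 0) {p : Pt n}
    (hω : ∀ I, DifferentiableAt ℂ (ω I) (shrink t p)) (J : Finset (Fin n)) :
    HasDerivAt (fun s : ℝ => (s : ℂ) ^ (n - J.card) * ω J (shrink s p))
      ((t : ℂ) ^ (n - J.card) * wedge (p.1 - p.2) (fun I => divergence ω I (shrink t p)) J +
        (t : ℂ) ^ (n - (J.card + 1)) * divergence (dKd n ω) J (shrink t p)) t := by
  set m := n - J.card with hm
  have hpow : HasDerivAt (fun s : ℝ => (s : ℂ) ^ m) (m * (t : ℂ) ^ (m - 1)) t := by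
    simpa using (Complex.ofRealCLM.hasDerivAt (x := t)).fun_pow m
  have hfderiv : HasFDerivAt (ω J) ((fderiv ℂ (ω J) (shrink t p)).restrictScalars ℝ)
      (shrink t p) := (hω J).hasFDerivAt.restrictScalars ℝ
  have hcomp : HasDerivAt (fun s : ℝ => ω J (shrink s p))
      (fderiv ℂ (ω J) (shrink t p) (p.1 - p.2, 0)) t :=
    HasFDerivAt.comp_hasDerivAt (f := fun s => shrink s p) t hfderiv (hasDerivAt_shrink p t)
  refine (hpow.mul hcomp).congr_deriv (mul_left_cancel₀ (Complex.ofReal_ne_zero.2 ht) ?_)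
  have hvec : ((shrink t p).1 - (shrink t p).2, 0) = (t : ℂ) • ((p.1 - p.2, 0) : Pt n) := by
    ext <;> simp [shrink]
  have hcartan := divergence_dKd_add_dKd_divergence hω J
  rw [dKd_shrink, hvec, map_smul, smul_eq_mul, ← hm] at hcartan
  have hmpow : (m : ℂ) * (t * (t : ℂ) ^ (m - 1)) = m * (t : ℂ) ^ m := by
    rcases m.eq_zero_or_pos with h | h
    · simp [h]
    · rw [mul_pow_sub_one h.ne']
  linear_combination ω J (shrink t p) * hmpow - (t : ℂ) ^ m * hcartan +
    pow_mul_divergence_eq (dKd n ω) J (t : ℂ) (shrink t p)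

theorem zero_pow_mul_eq_resd (ω : Coeff n) (J : Finset (Fin n)) (p : Pt n) :
    (0 : ℂ) ^ (n - J.card) * ω J (p.2, p.2) = resd n ω J p := by
  rcases eq_or_ne J Finset.univ with rfl | hJ
  · simp [resd]
  · have hcard : J.card < n := by simpa using (Finset.card_lt_iff_ne_univ J).2 hJ
    rw [resd, if_neg hJ, zero_pow (by omega), zero_mul]

theorem dKd_Pd_add_Pd_dKd (hUo : IsOpen U) (hUc : Convex ℝ U)
    (hω : ∀ I, DifferentiableOn ℂ (ω I) (U ×ˢ U)) (J : Finset (Fin n)) {p : Pt n}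
    (hp : p ∈ U ×ˢ U) :
    dKd n (Pd n ω) J p + Pd n (dKd n ω) J p = ω J p - resd n ω J p := by
  have hdω := differentiableOn_dKd hω
  have hdiv := fun I => (differentiableOn_divergence hUo hω I).continuousOn
  have hintegrable : IntervalIntegrable (fun t : ℝ => (t : ℂ) ^ (n - J.card) *
      wedge (p.1 - p.2) (fun I => divergence ω I (shrink t p)) J) volume 0 1 :=
    (continuousOn_pow_mul_comp_shrink hUc (continuousOn_wedge (p.1 - p.2) hdiv J) hp
      _).intervalIntegrable_of_Icc zero_le_one
  have hintegrable_div := (continuousOn_pow_mul_comp_shrink hUc (differentiableOn_divergence hUo hdω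
    J).continuousOn hp (n - (J.card + 1))).intervalIntegrable_of_Icc (μ := volume) zero_le_one
  have hcont := continuousOn_pow_mul_comp_shrink hUc (hω J).continuousOn hp (n - J.card)
  have hderiv := fun t (ht : t ∈ Ioo (0 : ℝ) 1) =>
    hasDerivAt_pow_mul_comp_shrink (ω := ω) (p := p) ht.1.ne' (fun I => (hω I).differentiableAt
      ((hUo.prod hUo).mem_nhds (shrink_mem hUc hp (Ioo_subset_Icc_self ht)))) J
  rw [dKd_Pd_eq_integral_wedge hUo hUc hω J hp, Pd_eq_integral_divergence hUo hUc hdω J hp,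
    ← intervalIntegral.integral_add hintegrable hintegrable_div,
    intervalIntegral.integral_eq_sub_of_hasDerivAt_of_le zero_le_one hcont hderiv
      (hintegrable.add hintegrable_div), ← zero_pow_mul_eq_resd]
  simp [shrink]

theorem Pd_eq_zero_of_eqOn_zero (hUo : IsOpen U) (hUc : Convex ℝ U)
    (hω : ∀ I, EqOn (ω I) 0 (U ×ˢ U)) (J : Finset (Fin n)) {p : Pt n} (hp : p ∈ U ×ˢ U) :
    Pd n ω J p = 0 := by
  have hpd : ∀ k I, ∀ q ∈ U ×ˢ U, pd n k (ω I) q = 0 := fun k I q hq => by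
    rw [pd, ((hω I).eventuallyEq_of_mem ((hUo.prod hUo).mem_nhds hq)).fderiv_eq]
    simp
  refine Finset.sum_eq_zero fun j _ => mul_eq_zero_of_right _ ?_
  refine intervalIntegral.integral_zero_ae (.of_forall fun t ht => ?_)
  rw [uIoc_of_le zero_le_one] at ht
  exact mul_eq_zero_of_right _ (hpd j _ _ (shrink_mem hUc hp (Ioc_subset_Icc_self ht)))

theorem eq_dKd_Pd_add_resd_of_closed (hUo : IsOpen U) (hUc : Convex ℝ U)
    (hω : ∀ I, DifferentiableOn ℂ (ω I) (U ×ˢ U)) (hclosed : ∀ I, EqOn (dKd n ω I) 0 (U ×ˢ U))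
    (J : Finset (Fin n)) {p : Pt n} (hp : p ∈ U ×ˢ U) :
    ω J p = dKd n (Pd n ω) J p + resd n ω J p := by
  linear_combination Pd_eq_zero_of_eqOn_zero hUo hUc hclosed J hp -
    dKd_Pd_add_Pd_dKd hUo hUc hω J hp

theorem Pd_univ (ω : Coeff n) (p : Pt n) : Pd n ω Finset.univ p = 0 := by
  simp [Pd]

theorem dKd_diagonal (ω : Coeff n) (J : Finset (Fin n)) (z : Fin n → ℂ) :
    dKd n ω J (z, z) = 0 := by
  simp [dKd]

theorem MemK.resd_eq_zero {q : ℕ} (hω : MemK n U q ω) (hq : q ≠ n) (J : Finset (Fin n))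
    (p : Pt n) : resd n ω J p = 0 := by
  simp [resd, hω.1 Finset.univ (by simpa using hq.symm)]

theorem MemK.Pd {q : ℕ} (hUo : IsOpen U) (hUc : Convex ℝ U) (hω : MemK n U (q + 1) ω) :
    MemK n U q (Pd n ω) := by
  refine ⟨fun J hJ => funext fun p => Finset.sum_eq_zero fun j hj => ?_,
    differentiableOn_Pd hUo hUc hω.2⟩
  have hcard : (insert j J).card ≠ q + 1 := by
    rw [Finset.card_insert_of_notMem (Finset.mem_compl.1 hj)]
    omega
  simp [hω.1 _ hcard, pd]

theorem memK_single_univ {f : Pt n → ℂ} (hf : DifferentiableOn ℂ f (U ×ˢ U)) :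
    MemK n U n (Pi.single Finset.univ f) := by
  refine ⟨fun I hI => ?_, fun I => ?_⟩
  · have hne : I ≠ Finset.univ := by
      rintro rfl
      simp at hI
    exact Pi.single_eq_of_ne (M := fun _ => Pt n → ℂ) hne f
  · rcases eq_or_ne I Finset.univ with rfl | hne
    · rwa [Pi.single_eq_same]
    · rw [Pi.single_eq_of_ne hne]
      exact differentiableOn_const 0

theorem exists_dKd_univ_eq (hn : 1 ≤ n) (hUo : IsOpen U) (hUc : Convex ℝ U) {f : Pt n → ℂ}
    (hf : DifferentiableOn ℂ f (U ×ˢ U)) (hdiag : ∀ z ∈ U, f (z, z) = 0) :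
    ∃ η : Coeff n, MemK n U (n - 1) η ∧ ∀ p ∈ U ×ˢ U, dKd n η Finset.univ p = f p := by
  have hmem := memK_single_univ hf
  refine ⟨Pd n (Pi.single Finset.univ f), .Pd hUo hUc (by rwa [Nat.sub_add_cancel hn]),
    fun p hp => ?_⟩
  have hhomotopy := dKd_Pd_add_Pd_dKd hUo hUc hmem.2 Finset.univ hp
  simpa [Pd_univ, resd, hdiag p.2 hp.2] using hhomotopy

end KoszulHomotopy

/-- The dual Koszul complex of global sections is a
resolution concentrated in top degree:
(i) for `0 ≤ q < n`, every `d_Ǩ`-closed `ω ∈ Ǩ^q` satisfies `ω = d_Ǩ(P̌ ω)`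
(in particular `ω = 0` when `q = 0`, since `d_Ǩ(P̌ ω)` vanishes in degree `0`);
(ii) `f ě^1 ∧ … ∧ ě^n ∈ Ǩ^n` lies in the image of `d_Ǩ : Ǩ^{n-1} → Ǩ^n` iff
`f(z, z) = 0` for all `z ∈ U`;
(iii) the augmentation `Ǩ^n → O(U)`, `f ě^1 ∧ … ∧ ě^n ↦ (z ↦ f(z, z))`, is
surjective — so that the augmented complex
`0 → Ǩ^0 → Ǩ^1 → … → Ǩ^n → O(U) → 0` is exact. -/
theorem statement11 (n : ℕ) (hn : 1 ≤ n)
    (U : Set (Fin n → ℂ)) (hUopen : IsOpen U) (hUconv : Convex ℝ U)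
    (hUne : U.Nonempty) :
    (∀ q : ℕ, q < n → ∀ ω : Coeff n, MemK n U q ω →
      (∀ J : Finset (Fin n), ∀ p ∈ U ×ˢ U, dKd n ω J p = 0) →
      ∀ J : Finset (Fin n), ∀ p ∈ U ×ˢ U, ω J p = dKd n (Pd n ω) J p) ∧
    (∀ f : Pt n → ℂ, DifferentiableOn ℂ f (U ×ˢ U) →
      ((∃ η : Coeff n, MemK n U (n - 1) η ∧
          ∀ p ∈ U ×ˢ U, dKd n η Finset.univ p = f p) ↔
        ∀ z ∈ U, f (z, z) = 0)) ∧
    (∀ g : (Fin n → ℂ) → ℂ, DifferentiableOn ℂ g U →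
      ∃ f : Pt n → ℂ, DifferentiableOn ℂ f (U ×ˢ U) ∧ ∀ z ∈ U, f (z, z) = g z) := by
  refine ⟨fun q hq ω hω hclosed J p hp => ?_, fun f hf => ⟨?_, ?_⟩, fun g hg => ?_⟩
  · rw [eq_dKd_Pd_add_resd_of_closed hUopen hUconv hω.2 hclosed J hp,
      hω.resd_eq_zero hq.ne, add_zero]
  · rintro ⟨η, -, hη⟩ z hz
    rw [← hη (z, z) ⟨hz, hz⟩, dKd_diagonal]
  · exact exists_dKd_univ_eq hn hUopen hUconv hf
  · exact ⟨fun p => g p.1, hg.comp differentiableOn_fst fun p hp => hp.1, fun _ _ => rfl⟩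

end TwistedKoszulDual
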